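/- There exists a constant C > 0 such that the following holds. For every Parity-k-Flip game G with odd k and n players, every state S_in of G, and every ε ∈ (0,1], there exists a sequence of states S_in = S_0, S_1, ..., S_T with T ≤ C·n^3·k^7/ε^4, where for each t < T the state S_{t+1} is obtained from S_t by flipping the variable of a single player j_t ∈ N with u_{j_t}(S_{t+1}) > u_{j_t}(S_t) (an improvement move), and S_T is a (k+ε)-approximate pure Nash equilibrium of G. -/

import Mathlib

/-!
In a parity game flipping `j` toggles exactly the clauses containing `j`, so
`u_j(S_{-j}) = U_j - u_j(S)` with `U_j` the total weight of the clauses of `j`, and the weight `Φ` of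
satisfied clauses is an exact potential. A player with `u_j < θ U_j` therefore gains more than
`(1 - 2θ) U_j` by flipping. Since `k` is odd and at least `2`, `k ≥ 3`, and it suffices to reach a
state in which every player has `u_j ≥ U_j / (4 + ε)`.

Players with `U_j > 0` are split into blocks `1, 2, …` by the size of `U_j`, consecutive block
boundaries `W i` having ratio `Δ = 1200 (n + 1) / ε²`. In phase `i` the players of block `i` flip
when `u_j < α U_j`, `α = 1/4 - ε/40`, and those of block `i + 1` flip when `u_j < β U_j`,
`β = 1/2 - ε/80`, until nobody wants to. At the start of phase `i` the players of block `i` have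
`u_j ≥ β U_j`, thanks to phase `i - 1`. Let `X` be the sum of `U_j` over the players of block `i`
that move in phase `i`, and `Y` the sum over block `i + 1`. The potential rises by at least
`(1/2 + ε/20) X`, while the unsatisfied weight around the movers at the start of the phase is at
most `(1/2 + ε/80) X + Y`. Hence `X = O(Y / ε)` (`phase`). This has two consequences. The phase has
few moves, as its total gain is `O(Y / ε)`. And, summed over all later phases, the utility lost by a
player `j` of block `i` is `O(1/ε)` times the sum of `U_l` over blocks `≥ i + 2`, which is at most
`(ε/40) U_j` by the choice of `Δ`; so `u_j ≥ (1/4 - ε/20) U_j ≥ U_j / (4 + ε)` at the end.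
The number of moves is `O(n Δ / ε²) = O(n (n + 1) / ε⁴)`.
-/

/-- A `P_k`-Flip game: boolean variables `V`, player-controlled variables `N ⊆ V`
(variables outside `N` are frozen), and clauses `C` with nonnegative weights,
at most `k` variables each, satisfaction predicates depending only on their own
variables, and the flip property: an unsatisfied clause becomes satisfied when
any one of its variables is flipped. -/
structure PkFlipGame (V C : Type) [Fintype V] [DecidableEq V] [Fintype C] (k : ℕ) where
  /-- the player-controlled variables -/
  N : Finset V
  /-- frozen values for the variables outside `N` -/
  frozen : V → Bool
  /-- clause weights -/
  w : C → ℝ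
  w_nonneg : ∀ c, 0 ≤ w c
  /-- the variables of each clause -/
  vars : C → Finset V
  vars_card_le : ∀ c, (vars c).card ≤ k
  /-- the satisfaction predicate of each clause -/
  sat : C → (V → Bool) → Bool
  sat_depends : ∀ c (S S' : V → Bool), (∀ v ∈ vars c, S v = S' v) → sat c S = sat c S'
  flip_sat : ∀ c (S : V → Bool) (j : V), j ∈ vars c → sat c S = false →
    sat c (Function.update S j (!S j)) = true

variable {V C : Type} [Fintype V] [DecidableEq V] [Fintype C] {k : ℕ}

/-- The state obtained from `S` by flipping the value of variable `j`. -/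
def flipVar (S : V → Bool) (j : V) : V → Bool := Function.update S j (!S j)

namespace PkFlipGame

/-- A state of the game: agrees with the frozen values outside `N`. -/
def IsState (G : PkFlipGame V C k) (S : V → Bool) : Prop :=
  ∀ v, v ∉ G.N → S v = G.frozen v

/-- Utility of player `j`: total weight of satisfied clauses containing `j`'s variable. -/
def util (G : PkFlipGame V C k) (j : V) (S : V → Bool) : ℝ :=
  ∑ c ∈ Finset.univ.filter (fun c => j ∈ G.vars c ∧ G.sat c S = true), G.w c

/-- The potential: total weight of satisfied clauses. -/
def potential (G : PkFlipGame V C k) (S : V → Bool) : ℝ :=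
  ∑ c ∈ Finset.univ.filter (fun c => G.sat c S = true), G.w c

/-- Maximum possible utility `U_j` of player `j`: total weight of clauses containing `j`. -/
def maxUtil (G : PkFlipGame V C k) (j : V) : ℝ :=
  ∑ c ∈ Finset.univ.filter (fun c => j ∈ G.vars c), G.w c

/-- The subgame potential `Φ_R`: total weight of satisfied clauses containing a
variable of some player in `R`. -/
def subPotential (G : PkFlipGame V C k) (R : Finset V) (S : V → Bool) : ℝ :=
  ∑ c ∈ Finset.univ.filter (fun c => G.sat c S = true ∧ ∃ j ∈ R, j ∈ G.vars c), G.w c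

/-- A `ρ`-approximate pure Nash equilibrium: a state where no player can increase
her utility by more than a factor `ρ` by flipping her variable. -/
def IsApproxEquilibrium (G : PkFlipGame V C k) (ρ : ℝ) (S : V → Bool) : Prop :=
  G.IsState S ∧ ∀ j ∈ G.N, G.util j (flipVar S j) ≤ ρ * G.util j S

/-- A pure Nash equilibrium: no player can strictly increase her utility. -/
def IsPNE (G : PkFlipGame V C k) (S : V → Bool) : Prop :=
  G.IsState S ∧ ∀ j ∈ G.N, G.util j (flipVar S j) ≤ G.util j S

end PkFlipGame

/-- A `Parity`-`k`-Flip game: a `P_k`-Flip game whose clauses are parity clauses,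
each labeled odd or even; an odd (resp. even) clause is satisfied iff the number
of its variables with value true is odd (resp. even). -/
structure ParityFlipGame (V C : Type) [Fintype V] [DecidableEq V] [Fintype C] (k : ℕ)
    extends PkFlipGame V C k where
  /-- the parity label of each clause: `true` = odd, `false` = even -/
  isOdd : C → Bool
  sat_iff : ∀ c (S : V → Bool), sat c S = true ↔
    (Odd ((vars c).filter (fun v => S v = true)).card ↔ isOdd c = true)

set_option linter.unusedSectionVars false

/-! ### Runs of single-player flips -/

/-- `Run step L R S S'`: there is a sequence of `L` flips from `S` to `S'`, each allowed by `step`,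
in which `R` is the set of players that move. -/
inductive Run (step : (V → Bool) → V → Prop) :
    ℕ → Finset V → (V → Bool) → (V → Bool) → Prop
  | refl (S : V → Bool) : Run step 0 ∅ S S
  | tail {L : ℕ} {R : Finset V} {S S' : V → Bool} {j : V} :
      Run step L R S S' → step S' j → Run step (L + 1) (insert j R) S (flipVar S' j)

namespace Run

lemma mono {step step' : (V → Bool) → V → Prop} (h : ∀ S j, step S j → step' S j)
    {L : ℕ} {R : Finset V} {S S' : V → Bool} (r : Run step L R S S') : Run step' L R S S' := by
  induction r with
  | refl S => exact .refl S
  | tail _ hs ih => exact .tail ih (h _ _ hs)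

lemma trans {step : (V → Bool) → V → Prop} {L L' : ℕ} {R R' : Finset V} {S S' S'' : V → Bool}
    (r : Run step L R S S') (r' : Run step L' R' S' S'') :
    Run step (L + L') (R ∪ R') S S'' := by
  induction r' with
  | refl S => simpa using r
  | tail _ hs ih =>
    have := Run.tail (ih r) hs
    rwa [← Finset.union_insert, add_assoc] at this

lemma agree {step : (V → Bool) → V → Prop} {L : ℕ} {R : Finset V} {S S' : V → Bool}
    (r : Run step L R S S') : ∀ v, v ∉ R → S' v = S v := by
  induction r with
  | refl S => simp
  | tail _ hs ih =>
    intro v hv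
    rw [Finset.mem_insert, not_or] at hv
    rw [flipVar, Function.update_of_ne hv.1]
    exact ih v hv.2

lemma subset {step : (V → Bool) → V → Prop} {L : ℕ} {R A : Finset V} {S S' : V → Bool}
    (h : ∀ S j, step S j → j ∈ A) (r : Run step L R S S') : R ⊆ A := by
  induction r with
  | refl S => simp
  | tail _ hs ih => exact Finset.insert_subset (h _ _ hs) ih

lemma exists_seq {step : (V → Bool) → V → Prop} {L : ℕ} {R : Finset V} {S S' : V → Bool}
    (r : Run step L R S S') :
    ∃ Sq : ℕ → V → Bool, Sq 0 = S ∧ Sq L = S' ∧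
      ∀ t < L, ∃ j, Sq (t + 1) = flipVar (Sq t) j ∧ step (Sq t) j := by
  induction r with
  | refl S => exact ⟨fun _ => S, rfl, rfl, by simp⟩
  | @tail L R S S' j _ hs ih =>
    obtain ⟨Sq, h0, hL, h⟩ := ih
    refine ⟨Function.update Sq (L + 1) (flipVar S' j), by simp [h0], by simp, fun t ht => ?_⟩
    rcases Nat.lt_succ_iff_lt_or_eq.1 ht with ht | rfl
    · rw [Function.update_of_ne (by omega), Function.update_of_ne (by omega)]
      exact h t ht
    · refine ⟨j, ?_, ?_⟩
      · rw [Function.update_self, Function.update_of_ne (by omega), hL]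
      · rwa [Function.update_of_ne (by omega), hL]

end Run

/-! ### Utilities and potential under flips -/

namespace ParityFlipGame

lemma sat_flip_mem (G : ParityFlipGame V C k) {c : C} {j : V} (hj : j ∈ G.vars c)
    (S : V → Bool) : G.sat c (flipVar S j) = !G.sat c S := by
  cases hs : G.sat c S with
  | false => exact G.flip_sat c S j hj hs
  | true =>
    by_contra hne
    have h1 : G.sat c (flipVar S j) = true := by simpa using hne
    have h2 := (G.sat_iff c S).1 hs
    have h3 := (G.sat_iff c _).1 h1
    have h4 : Odd ((G.vars c).filter (fun v => flipVar S j v = true)).card ↔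
        Odd ((G.vars c).filter (fun v => S v = true)).card := h3.trans h2.symm
    cases hv : S j with
    | false =>
      have : (G.vars c).filter (fun v => flipVar S j v = true) =
          insert j ((G.vars c).filter (fun v => S v = true)) := by
        ext v
        by_cases h : v = j
        · subst h; simp [flipVar, hv, hj]
        · have hfl : flipVar S j v = S v := Function.update_of_ne h _ _
          simp [h, hfl]
      rw [this, Finset.card_insert_of_notMem (by simp [hv]), Nat.odd_add_one] at h4
      tauto
    | true =>
      have : (G.vars c).filter (fun v => S v = true) =
          insert j ((G.vars c).filter (fun v => flipVar S j v = true)) := by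
        ext v
        by_cases h : v = j
        · subst h; simp [hv, hj]
        · have hfl : flipVar S j v = S v := Function.update_of_ne h _ _
          simp [h, hfl]
      rw [this, Finset.card_insert_of_notMem (by simp [flipVar, hv]), Nat.odd_add_one] at h4
      tauto

end ParityFlipGame

namespace PkFlipGame

lemma sat_congr_of_agree (G : PkFlipGame V C k) {R : Finset V} {S S' : V → Bool}
    (h : ∀ v, v ∉ R → S' v = S v) {c : C} (hc : ∀ j ∈ R, j ∉ G.vars c) :
    G.sat c S' = G.sat c S :=
  G.sat_depends c _ _ fun v hv => h v fun hR => hc v hR hv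

lemma maxUtil_nonneg (G : PkFlipGame V C k) (j : V) : 0 ≤ G.maxUtil j :=
  Finset.sum_nonneg fun c _ => G.w_nonneg c

lemma util_nonneg (G : PkFlipGame V C k) (j : V) (S : V → Bool) : 0 ≤ G.util j S :=
  Finset.sum_nonneg fun c _ => G.w_nonneg c

lemma maxUtil_le (G : PkFlipGame V C k) (j : V) : G.maxUtil j ≤ ∑ c, G.w c :=
  Finset.sum_le_sum_of_subset_of_nonneg (Finset.filter_subset _ _) fun c _ _ => G.w_nonneg c

lemma potential_le (G : PkFlipGame V C k) (S : V → Bool) : G.potential S ≤ ∑ c, G.w c :=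
  Finset.sum_le_sum_of_subset_of_nonneg (Finset.filter_subset _ _) fun c _ _ => G.w_nonneg c

lemma potential_nonneg (G : PkFlipGame V C k) (S : V → Bool) : 0 ≤ G.potential S :=
  Finset.sum_nonneg fun c _ => G.w_nonneg c

/-- If only players of `R` have moved, the potential rises by at most the weight around `R` that was
unsatisfied before. -/
lemma potential_le_of_agree (G : PkFlipGame V C k) {R : Finset V} {S S' : V → Bool}
    (h : ∀ v, v ∉ R → S' v = S v) :
    G.potential S' ≤ G.potential S + ∑ j ∈ R, (G.maxUtil j - G.util j S) := by
  simp only [potential, maxUtil, util, Finset.sum_filter, ← Finset.sum_sub_distrib]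
  rw [Finset.sum_comm, ← Finset.sum_add_distrib]
  refine Finset.sum_le_sum fun c _ => ?_
  have hw := G.w_nonneg c
  have hterm : ∀ j ∈ R, 0 ≤ (if j ∈ G.vars c then G.w c else 0) -
      (if j ∈ G.vars c ∧ G.sat c S = true then G.w c else 0) := by
    intro j _
    split_ifs <;> simp_all
  have hsum := Finset.sum_nonneg hterm
  by_cases hS : G.sat c S = true
  · rw [if_pos hS]
    split_ifs <;> linarith
  by_cases hS' : G.sat c S' = true
  · have : ∃ j ∈ R, j ∈ G.vars c := by
      by_contra! hc
      exact hS (G.sat_congr_of_agree h hc ▸ hS')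
    obtain ⟨j, hjR, hj⟩ := this
    have := Finset.single_le_sum hterm hjR
    rw [if_pos hS', if_neg hS]
    simp only [hj, hS] at this ⊢
    simpa [hS] using this
  · rw [if_neg hS', if_neg hS]
    linarith

lemma util_ge_of_agree (G : PkFlipGame V C k) {R : Finset V} {S S' : V → Bool}
    (h : ∀ v, v ∉ R → S' v = S v) (i : V) :
    G.util i S - ∑ j ∈ R, G.maxUtil j ≤ G.util i S' := by
  simp only [maxUtil, util, Finset.sum_filter]
  rw [Finset.sum_comm, ← Finset.sum_sub_distrib]
  refine Finset.sum_le_sum fun c _ => ?_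
  have hw := G.w_nonneg c
  have hterm : ∀ j ∈ R, 0 ≤ (if j ∈ G.vars c then G.w c else 0) := by
    intro j _
    split_ifs <;> simp_all
  have hsum := Finset.sum_nonneg hterm
  by_cases hc : ∃ j ∈ R, j ∈ G.vars c
  · obtain ⟨j, hjR, hj⟩ := hc
    have := Finset.single_le_sum hterm hjR
    rw [if_pos hj] at this
    split_ifs <;> linarith
  · push Not at hc
    rw [G.sat_congr_of_agree h hc]
    linarith

end PkFlipGame

namespace ParityFlipGame

lemma util_flip (G : ParityFlipGame V C k) (S : V → Bool) (j : V) :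
    G.util j (flipVar S j) = G.maxUtil j - G.util j S := by
  simp only [PkFlipGame.util, PkFlipGame.maxUtil, Finset.sum_filter, ← Finset.sum_sub_distrib]
  refine Finset.sum_congr rfl fun c _ => ?_
  by_cases hj : j ∈ G.vars c
  · rw [G.sat_flip_mem hj]
    cases G.sat c S <;> simp [hj]
  · simp [hj]

lemma potential_flip (G : ParityFlipGame V C k) (S : V → Bool) (j : V) :
    G.potential (flipVar S j) = G.potential S + (G.maxUtil j - 2 * G.util j S) := by
  have key : G.potential (flipVar S j) - G.potential S =
      G.util j (flipVar S j) - G.util j S := by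
    simp only [PkFlipGame.util, PkFlipGame.potential, Finset.sum_filter,
      ← Finset.sum_sub_distrib]
    refine Finset.sum_congr rfl fun c _ => ?_
    by_cases hj : j ∈ G.vars c
    · simp [hj]
    · have : G.sat c (flipVar S j) = G.sat c S := by
        refine G.sat_depends c _ _ fun v hv => ?_
        rw [flipVar, Function.update_of_ne]
        rintro rfl
        exact hj hv
      simp [hj, this]
  rw [util_flip] at key
  linarith

/-! ### A single phase -/

/-- The moves of a phase: players of `A` (the current block) flip when their utility is below the
fraction `1/4 - ε/40` of the maximum, players of `B` (the next block) already below the fraction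
`1/2 - ε/80`. -/
def PhaseStep (G : ParityFlipGame V C k) (ε : ℝ) (A B : Finset V) (S : V → Bool) (j : V) : Prop :=
  (j ∈ A ∧ G.util j S < (1 / 4 - ε / 40) * G.maxUtil j) ∨
    (j ∈ B ∧ G.util j S < (1 / 2 - ε / 80) * G.maxUtil j)

lemma phase_gain (G : ParityFlipGame V C k) {ε : ℝ} (hε : 0 < ε) {A B : Finset V}
    (hAB : Disjoint A B) {μ : ℝ} (hμA : ∀ j ∈ A, μ ≤ G.maxUtil j)
    (hμB : ∀ j ∈ B, μ ≤ G.maxUtil j) {L : ℕ} {R : Finset V} {S S' : V → Bool}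
    (r : Run (G.PhaseStep ε A B) L R S S') :
    G.potential S + (1 / 2 + ε / 20) * ∑ j ∈ R with j ∈ A, G.maxUtil j ≤ G.potential S' ∧
    G.potential S + ε / 40 * μ * L ≤ G.potential S' := by
  induction r with
  | refl S => simp
  | @tail L R S S' j _ hs ih =>
    obtain ⟨ih1, ih2⟩ := ih
    have hU := G.maxUtil_nonneg j
    rw [G.potential_flip]
    have hεU : 0 ≤ ε * G.maxUtil j := by positivity
    have hsum : ∑ i ∈ insert j R with i ∈ A, G.maxUtil i ≤
        ∑ i ∈ R with i ∈ A, G.maxUtil i + if j ∈ A then G.maxUtil j else 0 := by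
      rw [Finset.filter_insert]
      split_ifs with hjA
      · by_cases hjR : j ∈ R.filter (· ∈ A)
        · rw [Finset.insert_eq_of_mem hjR]; linarith
        · rw [Finset.sum_insert hjR]; linarith
      · linarith
    have hsum' := mul_le_mul_of_nonneg_left hsum (show 0 ≤ 1 / 2 + ε / 20 by positivity)
    push_cast
    rcases hs with ⟨hj, hlt⟩ | ⟨hj, hlt⟩
    · rw [if_pos hj] at hsum'
      have := mul_le_mul_of_nonneg_left (hμA j hj) hε.le
      constructor <;> nlinarith
    · rw [if_neg (Finset.disjoint_right.1 hAB hj)] at hsum'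
      have := mul_le_mul_of_nonneg_left (hμB j hj) hε.le
      constructor <;> nlinarith

/-- A phase terminates; its movers, and hence its length, are controlled by the total maximum utility
of the next block `B` alone. -/
lemma phase (G : ParityFlipGame V C k) {ε : ℝ} (hε : 0 < ε) (hε1 : ε ≤ 1) {A B : Finset V}
    (hAB : Disjoint A B) {μ : ℝ} (hμ : 0 < μ) (hμA : ∀ j ∈ A, μ ≤ G.maxUtil j)
    (hμB : ∀ j ∈ B, μ ≤ G.maxUtil j) (S : V → Bool)
    (hA : ∀ j ∈ A, (1 / 2 - ε / 80) * G.maxUtil j ≤ G.util j S) :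
    ∃ L R S', Run (G.PhaseStep ε A B) L R S S' ∧
      (∀ j ∈ A, (1 / 4 - ε / 40) * G.maxUtil j ≤ G.util j S') ∧
      (∀ j ∈ B, (1 / 2 - ε / 80) * G.maxUtil j ≤ G.util j S') ∧
      ∑ j ∈ R, G.maxUtil j ≤ 30 / ε * ∑ j ∈ B, G.maxUtil j ∧
      ε / 40 * μ * L ≤ 30 / ε * ∑ j ∈ B, G.maxUtil j := by
  classical
  -- Run lengths are bounded through the potential, so a longest run exists and is stuck.
  have hc : 0 < ε / 40 * μ := by positivity
  let P : ℕ → Prop := fun L => ∃ R S', Run (G.PhaseStep ε A B) L R S S'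
  have hbd : ∀ L, P L → L ≤ ⌈(∑ c, G.w c) / (ε / 40 * μ)⌉₊ := by
    rintro L ⟨R, S', r⟩
    have h1 := (G.phase_gain hε hAB hμA hμB r).2
    have h2 := G.potential_le S'
    have h3 := G.potential_nonneg S
    have : (L : ℝ) ≤ (∑ c, G.w c) / (ε / 40 * μ) := by
      rw [le_div_iff₀ hc]
      linarith
    exact_mod_cast this.trans (Nat.le_ceil _)
  have hP0 : P 0 := ⟨∅, S, .refl S⟩
  have hspec : P (Nat.findGreatest P ⌈(∑ c, G.w c) / (ε / 40 * μ)⌉₊) :=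
    Nat.findGreatest_spec (Nat.zero_le _) hP0
  have hmax : ∀ L, P L → L ≤ Nat.findGreatest P ⌈(∑ c, G.w c) / (ε / 40 * μ)⌉₊ :=
    fun L hL => Nat.le_findGreatest (hbd L hL) hL
  generalize Nat.findGreatest P ⌈(∑ c, G.w c) / (ε / 40 * μ)⌉₊ = L at hspec hmax
  obtain ⟨R, S', r⟩ := hspec
  have hstuck : ∀ j, ¬ G.PhaseStep ε A B S' j := by
    intro j hj
    have := hmax (L + 1) ⟨_, _, r.tail hj⟩
    omega
  have hRAB : R ⊆ A ∪ B := r.subset fun S j h => by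
    rcases h with h | h
    · exact Finset.mem_union_left _ h.1
    · exact Finset.mem_union_right _ h.1
  obtain ⟨g1, g2⟩ := G.phase_gain hε hAB hμA hμB r
  have hup := G.potential_le_of_agree r.agree
  set X := ∑ j ∈ R with j ∈ A, G.maxUtil j with hX
  set Y := ∑ j ∈ B, G.maxUtil j with hY
  have hsplit : ∑ j ∈ R, G.maxUtil j = X + ∑ j ∈ R with j ∉ A, G.maxUtil j :=
    (Finset.sum_filter_add_sum_filter_not R (· ∈ A) _).symm
  have hYB : ∑ j ∈ R with j ∉ A, G.maxUtil j ≤ Y := by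
    refine Finset.sum_le_sum_of_subset_of_nonneg ?_ fun j _ _ => G.maxUtil_nonneg j
    intro j hj
    rw [Finset.mem_filter] at hj
    exact (Finset.mem_union.1 (hRAB hj.1)).resolve_left hj.2
  have hY0 : 0 ≤ Y := Finset.sum_nonneg fun j _ => G.maxUtil_nonneg j
  have hX0 : 0 ≤ X := Finset.sum_nonneg fun j _ => G.maxUtil_nonneg j
  have hup1 : ∑ j ∈ R, (G.maxUtil j - G.util j S) ≤ ∑ j ∈ R, G.maxUtil j :=
    Finset.sum_le_sum fun j _ => by linarith [G.util_nonneg j S]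
  have hup2 : ∑ j ∈ R, (G.maxUtil j - G.util j S) ≤ (1 / 2 + ε / 80) * X + Y := by
    rw [← Finset.sum_filter_add_sum_filter_not R (· ∈ A)]
    refine add_le_add ?_ (le_trans ?_ hYB)
    · rw [hX, Finset.mul_sum]
      refine Finset.sum_le_sum fun j hj => ?_
      linarith [hA j (Finset.mem_filter.1 hj).2]
    · exact Finset.sum_le_sum fun j _ => by linarith [G.util_nonneg j S]
  have hXY : 3 * ε * X ≤ 80 * Y := by linarith
  have hR : ∑ j ∈ R, G.maxUtil j ≤ 30 / ε * Y := by
    rw [div_mul_eq_mul_div, le_div_iff₀ hε, hsplit]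
    nlinarith
  refine ⟨L, R, S', r, fun j hj => ?_, fun j hj => ?_, hR, by linarith⟩
  · by_contra! h
    exact hstuck j (Or.inl ⟨hj, h⟩)
  · by_contra! h
    exact hstuck j (Or.inr ⟨hj, h⟩)

/-! ### Running through all blocks -/

/-- A flip by a player of `N` that strictly improves her utility. -/
def Improves (G : ParityFlipGame V C k) (S : V → Bool) (j : V) : Prop :=
  j ∈ G.N ∧ G.util j S < G.util j (flipVar S j)

lemma PhaseStep.improves {G : ParityFlipGame V C k} {ε : ℝ} (hε : 0 < ε) {A B : Finset V}
    (hA : A ⊆ G.N) (hB : B ⊆ G.N) {S : V → Bool} {j : V} (h : G.PhaseStep ε A B S j) :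
    G.Improves S j := by
  have hU := G.maxUtil_nonneg j
  have hεU : 0 ≤ ε * G.maxUtil j := by positivity
  rcases h with ⟨hj, h⟩ | ⟨hj, h⟩
  · exact ⟨hA hj, by rw [util_flip]; linarith⟩
  · exact ⟨hB hj, by rw [util_flip]; linarith⟩

/-- The state after the phases `0, …, i - 1`, for players `P` with block numbers `b` and block
boundaries `W`: block `i` is ready for its phase, and each earlier player has lost at most `30 / ε`
times the maximum utilities of the blocks processed at least two after her own. -/
lemma phases (G : ParityFlipGame V C k) {ε : ℝ} (hε : 0 < ε) (hε1 : ε ≤ 1) {P : Finset V}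
    (hP : P ⊆ G.N) {Δ : ℝ} (hΔ : 0 ≤ Δ) {b : V → ℕ} {W : ℕ → ℝ}
    (hb : ∀ j ∈ P, 1 ≤ b j) (hW : ∀ i, 0 < W i) (hWΔ : ∀ i, Δ * W (i + 1) = W i)
    (hanti : Antitone W) (hle : ∀ j ∈ P, G.maxUtil j ≤ W (b j))
    (hge : ∀ j ∈ P, W (b j + 1) ≤ G.maxUtil j) (S₀ : V → Bool) (i : ℕ) :
    ∃ L R S, Run G.Improves L R S₀ S ∧
      (∀ j ∈ P, b j = i → (1 / 2 - ε / 80) * G.maxUtil j ≤ G.util j S) ∧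
      (∀ j ∈ P, b j < i → (1 / 4 - ε / 40) * G.maxUtil j -
        30 / ε * ∑ l ∈ P with b j + 2 ≤ b l ∧ b l ≤ i, G.maxUtil l ≤ G.util j S) ∧
      (L : ℝ) ≤ 1200 / ε ^ 2 * Δ * (P.filter (fun l => b l ≤ i)).card := by
  induction i with
  | zero =>
    refine ⟨0, ∅, S₀, .refl _, fun j hj h => ?_, fun j hj h => ?_, ?_⟩
    · have := hb j hj
      omega
    · omega
    · simp only [Nat.cast_zero]
      positivity
  | succ i ih =>
    obtain ⟨L, R, S, r, h1, h2, h3⟩ := ih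
    have hA : ∀ j ∈ P.filter (fun l => b l = i), W (i + 2) ≤ G.maxUtil j := by
      intro j hj
      obtain ⟨hjP, hbj⟩ := Finset.mem_filter.1 hj
      exact (hanti (by omega)).trans (hge j hjP)
    have hB : ∀ j ∈ P.filter (fun l => b l = i + 1), W (i + 2) ≤ G.maxUtil j := by
      intro j hj
      obtain ⟨hj, hbj⟩ := Finset.mem_filter.1 hj
      have := hge j hj
      rwa [hbj] at this
    have hdisj : Disjoint (P.filter (fun l => b l = i)) (P.filter (fun l => b l = i + 1)) := by
      rw [Finset.disjoint_filter]
      intro x _ h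
      omega
    obtain ⟨L', R', S', r', hA', hB', hR', hL'⟩ := G.phase hε hε1 hdisj (hW (i + 2)) hA hB S
      fun j hj => h1 j (Finset.mem_filter.1 hj).1 (Finset.mem_filter.1 hj).2
    have hsub : ∀ m, P.filter (fun l => b l = m) ⊆ G.N :=
      fun m => (Finset.filter_subset _ _).trans hP
    refine ⟨L + L', R ∪ R', S',
      r.trans (r'.mono fun S j h => h.improves hε (hsub _) (hsub _)),
      fun j hj h => hB' j (Finset.mem_filter.2 ⟨hj, h⟩), fun j hj h => ?_, ?_⟩
    · rcases Nat.lt_succ_iff_lt_or_eq.1 h with h | h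
      · have hloss := G.util_ge_of_agree r'.agree j
        have hold := h2 j hj h
        have hsum : ∑ l ∈ P with b j + 2 ≤ b l ∧ b l ≤ i + 1, G.maxUtil l =
            ∑ l ∈ P with b j + 2 ≤ b l ∧ b l ≤ i, G.maxUtil l +
              ∑ l ∈ P with b l = i + 1, G.maxUtil l := by
          rw [← Finset.sum_union]
          · congr 1
            ext l
            simp only [Finset.mem_union, Finset.mem_filter]
            constructor
            · rintro ⟨hl, _, _⟩
              by_cases b l = i + 1
              · tauto
              · left; refine ⟨hl, ?_, ?_⟩ <;> omega
            · rintro (⟨hl, _, _⟩ | ⟨hl, _⟩) <;> refine ⟨hl, ?_, ?_⟩ <;> omega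
          · rw [Finset.disjoint_filter]
            intro x _ h
            omega
        rw [hsum, mul_add]
        linarith
      · have := hA' j (Finset.mem_filter.2 ⟨hj, h⟩)
        have h0 : 0 ≤ 30 / ε * ∑ l ∈ P with b j + 2 ≤ b l ∧ b l ≤ i + 1, G.maxUtil l :=
          mul_nonneg (by positivity) (Finset.sum_nonneg fun l _ => G.maxUtil_nonneg l)
        linarith
    · have hcard : (P.filter (fun l => b l ≤ i + 1)).card =
          (P.filter (fun l => b l ≤ i)).card + (P.filter (fun l => b l = i + 1)).card := by
        rw [← Finset.card_union_of_disjoint]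
        · congr 1
          ext l
          simp only [Finset.mem_union, Finset.mem_filter]
          rw [← and_or_left]
          refine and_congr_right fun _ => ?_
          omega
        · rw [Finset.disjoint_filter]
          intro x _ h
          omega
      have hsumB : ∑ j ∈ P with b j = i + 1, G.maxUtil j ≤
          (P.filter (fun l => b l = i + 1)).card * (Δ * W (i + 2)) := by
        rw [← nsmul_eq_mul]
        refine Finset.sum_le_card_nsmul _ _ _ fun j hj => ?_
        obtain ⟨hj, hbj⟩ := Finset.mem_filter.1 hj
        have := hle j hj
        rwa [hbj, ← hWΔ] at this
      have hL'' : (L' : ℝ) ≤ 1200 / ε ^ 2 * Δ * (P.filter (fun l => b l = i + 1)).card := by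
        have h4 := hL'.trans (mul_le_mul_of_nonneg_left hsumB (by positivity))
        have hw := hW (i + 2)
        have h5 : (L' : ℝ) * (ε / 40 * W (i + 2)) ≤
            (1200 / ε ^ 2 * Δ * (P.filter (fun l => b l = i + 1)).card) *
              (ε / 40 * W (i + 2)) := by
          calc (L' : ℝ) * (ε / 40 * W (i + 2)) = ε / 40 * W (i + 2) * L' := by ring
            _ ≤ _ := h4
            _ = _ := by field_simp; ring
        exact le_of_mul_le_mul_right h5 (by positivity)
      rw [hcard]
      push_cast
      rw [mul_add]
      linarith

/-- Geometric block boundaries and block numbers for the players of `P`. -/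
lemma exists_blocks (G : ParityFlipGame V C k) {P : Finset V} (hP : ∀ j ∈ P, 0 < G.maxUtil j)
    {Δ : ℝ} (hΔ : 1 < Δ) :
    ∃ (b : V → ℕ) (W : ℕ → ℝ), (∀ j ∈ P, 1 ≤ b j) ∧ (∀ i, 0 < W i) ∧
      (∀ i, Δ * W (i + 1) = W i) ∧ Antitone W ∧ (∀ j ∈ P, G.maxUtil j ≤ W (b j)) ∧
      (∀ j ∈ P, W (b j + 1) ≤ G.maxUtil j) := by
  classical
  have hw : 0 ≤ ∑ c, G.w c := Finset.sum_nonneg fun c _ => G.w_nonneg c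
  set Z := ∑ c, G.w c + 1 with hZ
  have hZ0 : 0 < Z := by linarith
  have hΔ0 : 0 < Δ := by linarith
  have hex : ∀ j, ∃ m : ℕ, j ∈ P → Δ ^ m ≤ Z / G.maxUtil j ∧ Z / G.maxUtil j < Δ ^ (m + 1) := by
    intro j
    by_cases hj : j ∈ P
    · have : 1 ≤ Z / G.maxUtil j := by
        rw [le_div_iff₀ (hP j hj)]
        linarith [G.maxUtil_le j]
      obtain ⟨m, hm⟩ := exists_nat_pow_near this hΔ
      exact ⟨m, fun _ => hm⟩
    · exact ⟨0, fun h => absurd h hj⟩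
  choose m hm using hex
  have hWΔ : ∀ i : ℕ, Δ * (Z * Δ / Δ ^ (i + 1)) = Z * Δ / Δ ^ i := by
    intro i
    field_simp
    ring
  refine ⟨fun j => m j + 1, fun i => Z * Δ / Δ ^ i, by simp, fun i => by positivity, hWΔ,
    antitone_nat_of_succ_le fun i => ?_, fun j hj => ?_, fun j hj => ?_⟩
  · rw [← hWΔ i]
    have : 0 < Z * Δ / Δ ^ (i + 1) := by positivity
    nlinarith
  · have h := (hm j hj).1
    rw [le_div_iff₀ (hP j hj)] at h
    rw [le_div_iff₀ (by positivity), pow_succ]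
    nlinarith
  · have h := (hm j hj).2
    rw [div_lt_iff₀ (hP j hj)] at h
    rw [div_le_iff₀ (by positivity), pow_succ]
    nlinarith

end ParityFlipGame

/-- There is a universal constant `C > 0` such that in every `Parity`-`k`-Flip
game with odd `k` and `n` players, from every initial state there is a sequence
of at most `C·n³·k⁷/ε⁴` improvement moves ending at a `(k+ε)`-approximate pure
Nash equilibrium, for every `ε ∈ (0,1]`. -/
theorem parity_short_sequence :
    ∃ Cst : ℝ, 0 < Cst ∧
      ∀ (V C : Type) [Fintype V] [DecidableEq V] [Fintype C] (k : ℕ), 2 ≤ k → Odd k →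
        ∀ (G : ParityFlipGame V C k) (Sin : V → Bool), G.toPkFlipGame.IsState Sin →
          ∀ ε : ℝ, 0 < ε → ε ≤ 1 →
            ∃ (T : ℕ) (Sq : ℕ → V → Bool),
              (T : ℝ) ≤ Cst * (G.toPkFlipGame.N.card : ℝ) ^ 3 * (k : ℝ) ^ 7 / ε ^ 4 ∧
              Sq 0 = Sin ∧
              (∀ t < T, ∃ j ∈ G.toPkFlipGame.N,
                Sq (t + 1) = flipVar (Sq t) j ∧
                G.toPkFlipGame.util j (Sq t) < G.toPkFlipGame.util j (Sq (t + 1))) ∧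
              G.toPkFlipGame.IsApproxEquilibrium ((k : ℝ) + ε) (Sq T) := by
  refine ⟨2 * 1200 * 1200, by norm_num, ?_⟩
  intro V C _ _ _ k hk2 hkodd G Sin hSin ε hε hε1
  have hk3 : 3 ≤ k := by
    obtain ⟨m, rfl⟩ := hkodd
    omega
  have hk3' : (3 : ℝ) ≤ k := by exact_mod_cast hk3
  set n : ℝ := (G.N.card : ℝ) with hn
  have hn0 : 0 ≤ n := Nat.cast_nonneg _
  set P := G.N.filter (fun j => 0 < G.maxUtil j) with hP
  set Δ : ℝ := 1200 * (n + 1) / ε ^ 2 with hΔ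
  have hΔ1 : 1 < Δ := by
    rw [hΔ, lt_div_iff₀ (by positivity)]
    nlinarith
  obtain ⟨b, W, hb, hW, hWΔ, hanti, hle, hge⟩ :=
    G.exists_blocks (P := P) (fun j hj => (Finset.mem_filter.1 hj).2) hΔ1
  have hPN : P ⊆ G.N := Finset.filter_subset _ _
  -- Beyond the index `M` there are no blocks left.
  set M := P.sup b + 1 with hM
  have hbM : ∀ j ∈ P, b j < M := fun j hj => Nat.lt_succ_of_le (Finset.le_sup hj)
  obtain ⟨L, R, S, r, -, h2, h3⟩ :=
    G.phases hε hε1 hPN (by linarith) hb hW hWΔ hanti hle hge Sin M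
  obtain ⟨Sq, hS0, hSL, hstep⟩ := r.exists_seq
  have hPn : (P.card : ℝ) ≤ n := by
    rw [hn]
    exact_mod_cast Finset.card_le_card hPN
  refine ⟨L, Sq, ?_, hS0, fun t ht => ?_, ?_⟩
  · have hcard : ((P.filter (fun l => b l ≤ M)).card : ℝ) ≤ n :=
      le_trans (by exact_mod_cast Finset.card_filter_le _ _) hPn
    have h4 : (L : ℝ) ≤ 1200 / ε ^ 2 * Δ * n :=
      h3.trans (mul_le_mul_of_nonneg_left hcard (by positivity))
    have hk7 : (1 : ℝ) ≤ (k : ℝ) ^ 7 := one_le_pow₀ (by linarith)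
    have hn3 : n * (n + 1) ≤ 2 * n ^ 3 := by
      rcases Nat.eq_zero_or_pos G.N.card with h | h
      · have : n = 0 := by rw [hn, h]; simp
        rw [this]; norm_num
      · have : 1 ≤ n := by
          rw [hn]
          exact_mod_cast h
        nlinarith [mul_nonneg hn0 (sub_nonneg.2 this),
          mul_nonneg (mul_nonneg hn0 hn0) (sub_nonneg.2 this)]
    have h5 : n * (n + 1) ≤ 2 * n ^ 3 * (k : ℝ) ^ 7 :=
      hn3.trans (le_mul_of_one_le_right (by positivity) hk7)
    calc (L : ℝ) ≤ 1200 / ε ^ 2 * Δ * n := h4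
      _ = 1200 * 1200 * (n * (n + 1)) / ε ^ 4 := by rw [hΔ]; field_simp
      _ ≤ _ := by
        refine div_le_div_of_nonneg_right ?_ (by positivity)
        linarith
  · obtain ⟨j, hj1, hj2⟩ := hstep t ht
    exact ⟨j, hj2.1, hj1, hj1 ▸ hj2.2⟩
  · rw [hSL]
    refine ⟨fun v hv => ?_, fun j hj => ?_⟩
    · have hRN : R ⊆ G.N := r.subset fun S j h => h.1
      rw [r.agree v fun h => hv (hRN h)]
      exact hSin v hv
    · rw [G.util_flip]
      have hu := G.util_nonneg j S
      have hmono : (3 + ε) * G.util j S ≤ (k + ε) * G.util j S :=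
        mul_le_mul_of_nonneg_right (by linarith) hu
      rcases (G.maxUtil_nonneg j).eq_or_lt with h0 | hpos
      · have : 0 ≤ (3 + ε) * G.util j S := by positivity
        linarith
      have hjP : j ∈ P := Finset.mem_filter.2 ⟨hj, hpos⟩
      have hj2 := h2 j hjP (hbM j hjP)
      have hsum : ∑ l ∈ P with b j + 2 ≤ b l ∧ b l ≤ M, G.maxUtil l ≤
          n * (G.maxUtil j / Δ) := by
        have hx : 0 ≤ G.maxUtil j / Δ := by positivity
        refine le_trans (Finset.sum_le_card_nsmul _ _ (G.maxUtil j / Δ) fun l hl => ?_) ?_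
        · obtain ⟨hl, hbl, _⟩ := Finset.mem_filter.1 hl
          have h6 := (hle l hl).trans (hanti hbl)
          have h7 := hge j hjP
          rw [← hWΔ] at h7
          rw [le_div_iff₀ (by linarith)]
          nlinarith
        · rw [nsmul_eq_mul]
          refine mul_le_mul_of_nonneg_right (le_trans ?_ hPn) hx
          exact_mod_cast Finset.card_filter_le _ _
      have herr : 30 / ε * (n * (G.maxUtil j / Δ)) ≤ ε / 40 * G.maxUtil j := by
        have : 30 / ε * (n * (G.maxUtil j / Δ)) =
            ε / 40 * G.maxUtil j * (n / (n + 1)) := by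
          rw [hΔ]
          field_simp
          ring
        rw [this]
        refine mul_le_of_le_one_right (by positivity) ?_
        rw [div_le_one (by linarith)]
        linarith
      have h8 := mul_le_mul_of_nonneg_left hsum (show 0 ≤ 30 / ε by positivity)
      have h9 : (1 / 4 - ε / 20) * G.maxUtil j ≤ G.util j S := by linarith
      -- `(4 + ε) (1/4 - ε/20) = 1 + ε (1 - ε) / 20 ≥ 1`
      have h10 : G.maxUtil j ≤ (4 + ε) * ((1 / 4 - ε / 20) * G.maxUtil j) := by
        nlinarith [mul_nonneg (mul_nonneg hε.le (sub_nonneg.2 hε1)) hpos.le]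
      have h11 := mul_le_mul_of_nonneg_left h9 (show 0 ≤ 4 + ε by linarith)
      linarith
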